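/- Let F₄ = GF(4), let n be odd, let g₁, g₂ be monic divisors of Xⁿ−1 in F₄[X], and let ν ∈ F₄[X]. Assume: g₁ divides g₁^{⊥h}; g₂ divides g₂^{⊥h}; g₂ divides the remainder of (ν+ν̄)·g₁^{⊥h} modulo Xⁿ−1; g₁ divides the remainder of (ν·ν̄+1)·g₁^{⊥h} modulo Xⁿ−1; and g₂ divides the remainder of (ν·ν̄+1)·g₂^{⊥h} modulo Xⁿ−1. Then the code D ⊆ F₄^{2n}, defined as the F₄-span of all vectors ([−ν̄·c·g₁^{⊥h}]ₙ, [c·g₁^{⊥h}]ₙ) and ([s·g₂^{⊥h}]ₙ, [−ν̄·s·g₂^{⊥h}]ₙ) for c, s ∈ F₄[X], is Hermitian self-orthogonal: D ⊆ D^{⊥h}. -/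

import Mathlib

open Polynomial

set_option synthInstance.maxHeartbeats 1000000
set_option maxHeartbeats 1000000

noncomputable section

/-- The field `F₄ = GF(4)`. -/
abbrev F4 : Type := GaloisField 2 2

/-- The coefficient vector `[p]ₙ ∈ F₄ⁿ` of the remainder of `p` modulo `Xⁿ - 1`
(coefficient of `X^i` in position `i`). -/
def coeffVec (n : ℕ) (p : Polynomial F4) : Fin n → F4 :=
  fun i => (p % (X ^ n - 1)).coeff i

/-- The Hermitian inner product `⟨u,v⟩_h = ∑ i, u i * (v i)²` on `F₄^m`. -/
def hermInner {m : ℕ} (u v : Fin m → F4) : F4 := ∑ i, u i * (v i) ^ 2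

/-- The Hermitian inner product on `F₄ⁿ × F₄ⁿ`: the sum of the Hermitian inner
products of the two components. -/
def hermInner2 {n : ℕ} (u v : (Fin n → F4) × (Fin n → F4)) : F4 :=
  hermInner u.1 v.1 + hermInner u.2 v.2

/-- The conjugate transform `f̄ := f₀² + ∑_{i=1}^{n-1} f_i² X^{n-i}`, where `f` is first
reduced modulo `Xⁿ - 1`. -/
def conjT (n : ℕ) (f : Polynomial F4) : Polynomial F4 :=
  C (((f % (X ^ n - 1)).coeff 0) ^ 2) +
    ∑ i ∈ Finset.Ico 1 n, C (((f % (X ^ n - 1)).coeff i) ^ 2) * X ^ (n - i)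

/-- The Hermitian dual generator `g^{⊥h}(X) := ∑_{j=0}^{deg h} (h_j)² X^{deg h - j}`,
the conjugate reciprocal of the check polynomial `h = (Xⁿ-1)/g`. -/
def dualGen (n : ℕ) (g : Polynomial F4) : Polynomial F4 :=
  ∑ j ∈ Finset.range (((X ^ n - 1) / g).natDegree + 1),
    C ((((X ^ n - 1) / g).coeff j) ^ 2) * X ^ (((X ^ n - 1) / g).natDegree - j)

lemma hermInner_add_right {m : ℕ} (u v w : Fin m → F4) :
    hermInner u (v + w) = hermInner u v + hermInner u w := by
  simp only [hermInner, Pi.add_apply]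
  rw [← Finset.sum_add_distrib]
  refine Finset.sum_congr rfl fun i _ => ?_
  rw [add_pow_char (v i) (w i) 2, mul_add]

lemma hermInner_smul_right {m : ℕ} (c : F4) (u v : Fin m → F4) :
    hermInner u (c • v) = c ^ 2 * hermInner u v := by
  simp only [hermInner, Pi.smul_apply, smul_eq_mul, mul_pow, Finset.mul_sum]
  exact Finset.sum_congr rfl fun i _ => by ring

/-- The Hermitian dual code `C^{⊥h} = {v | ∀ u ∈ C, ⟨u,v⟩_h = 0}` of a linear code in `F₄^m`. -/
def hermDual {m : ℕ} (Ccode : Submodule F4 (Fin m → F4)) : Submodule F4 (Fin m → F4) where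
  carrier := {v | ∀ u ∈ Ccode, hermInner u v = 0}
  zero_mem' := by intro u _; simp [hermInner]
  add_mem' := by
    intro v w hv hw u hu
    rw [hermInner_add_right, hv u hu, hw u hu, add_zero]
  smul_mem' := by
    intro c v hv u hu
    rw [hermInner_smul_right, hv u hu, mul_zero]

lemma hermInner2_add_right {n : ℕ} (u v w : (Fin n → F4) × (Fin n → F4)) :
    hermInner2 u (v + w) = hermInner2 u v + hermInner2 u w := by
  simp only [hermInner2, Prod.fst_add, Prod.snd_add, hermInner_add_right]
  ring

lemma hermInner2_smul_right {n : ℕ} (c : F4) (u v : (Fin n → F4) × (Fin n → F4)) :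
    hermInner2 u (c • v) = c ^ 2 * hermInner2 u v := by
  simp only [hermInner2, Prod.smul_fst, Prod.smul_snd, hermInner_smul_right]
  ring

/-- The Hermitian dual code of a linear code in `F₄ⁿ × F₄ⁿ` (identified with `F₄^{2n}`). -/
def hermDualPair {n : ℕ} (Ccode : Submodule F4 ((Fin n → F4) × (Fin n → F4))) :
    Submodule F4 ((Fin n → F4) × (Fin n → F4)) where
  carrier := {v | ∀ u ∈ Ccode, hermInner2 u v = 0}
  zero_mem' := by intro u _; simp [hermInner2, hermInner]
  add_mem' := by
    intro v w hv hw u hu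
    rw [hermInner2_add_right, hv u hu, hw u hu, add_zero]
  smul_mem' := by
    intro c v hv u hu
    rw [hermInner2_smul_right, hv u hu, mul_zero]

/-- Hamming weight of a vector. -/
def hammingWt {m : ℕ} (u : Fin m → F4) : ℕ := Nat.card {i : Fin m // u i ≠ 0}

/-- The 2-generator quasi-cyclic code `C(g₁,g₂,ν)` of length `2n` and index 2:
the `F₄`-span of all `([a·ν·g₁]ₙ, [a·g₁]ₙ)` and `([b·g₂]ₙ, [b·ν·g₂]ₙ)`. -/
def Cqc (n : ℕ) (g₁ g₂ ν : Polynomial F4) : Submodule F4 ((Fin n → F4) × (Fin n → F4)) :=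
  Submodule.span F4
    ({x | ∃ a : Polynomial F4, x = (coeffVec n (a * ν * g₁), coeffVec n (a * g₁))} ∪
     {x | ∃ b : Polynomial F4, x = (coeffVec n (b * g₂), coeffVec n (b * ν * g₂))})

/-- The quasi-cyclic code `D`: the `F₄`-span of all `([-ν̄·c·g₁^{⊥h}]ₙ, [c·g₁^{⊥h}]ₙ)`
and `([s·g₂^{⊥h}]ₙ, [-ν̄·s·g₂^{⊥h}]ₙ)`. -/
def Dqc (n : ℕ) (g₁ g₂ ν : Polynomial F4) : Submodule F4 ((Fin n → F4) × (Fin n → F4)) :=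
  Submodule.span F4
    ({x | ∃ c : Polynomial F4,
        x = (coeffVec n (-(conjT n ν) * c * dualGen n g₁), coeffVec n (c * dualGen n g₁))} ∪
     {x | ∃ s : Polynomial F4,
        x = (coeffVec n (s * dualGen n g₂), coeffVec n (-(conjT n ν) * s * dualGen n g₂))})

/-- The quotient ring `R = F₄[X]/(Xⁿ - 1)`. -/
abbrev Rng (n : ℕ) : Type := Polynomial F4 ⧸ Ideal.span ({X ^ n - 1} : Set (Polynomial F4))

/-- The natural projection `F₄[X] → R`. -/
def toRng (n : ℕ) : Polynomial F4 →+* Rng n := Ideal.Quotient.mk _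

/-- The `R`-linear map `R → R × R`, `a ↦ (a·û, a·v̂)`, where `û, v̂` are the images of
`u, v` in `R`. -/
def qcMap (n : ℕ) (u v : Polynomial F4) : Rng n →ₗ[Rng n] Rng n × Rng n :=
  (LinearMap.toSpanSingleton (Rng n) (Rng n) (toRng n u)).prod
    (LinearMap.toSpanSingleton (Rng n) (Rng n) (toRng n v))

/-!
In `R = F₄[X]/(Xⁿ - 1)`, with `x` the class of `X`, let `σ` be the ring involution that squares
coefficients and sends `x` to `x⁻¹`. It realises `f ↦ f̄`, and `⟨[f]ₙ, [g]ₙ⟩_h` is the constant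
coefficient of `f · σ g`. Up to a power of `x`, `σ (g^{⊥h})` is the class of `h = (Xⁿ - 1)/g`, so it
is annihilated by every multiple of `g`. Hence each divisibility assumption says that a product such
as `(νν̄ + 1) · g₁^{⊥h} · σ (g₁^{⊥h})` vanishes in `R`, and the inner product of any two generators
of `D` is the constant coefficient of an `R`-multiple of one of these products or of its image
under `σ`.
-/

lemma frobenius_comp_frobenius_of_natCard_eq_sq {K : Type*} [Field K] (p : ℕ) [Fact p.Prime]
    [CharP K p] (hK : Nat.card K = p ^ 2) :
    (frobenius K p).comp (frobenius K p) = RingHom.id K := by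
  have : Finite K := Nat.finite_of_card_ne_zero (hK ▸ pow_ne_zero 2 (Fact.out : p.Prime).ne_zero)
  let _ : Fintype K := Fintype.ofFinite K
  rw [Nat.card_eq_fintype_card] at hK
  rw [← RingHom.mul_def, ← sq, FiniteField.frobenius_pow hK, RingHom.one_def]

lemma frobenius_comp_frobenius_F4 : (frobenius F4 2).comp (frobenius F4 2) = RingHom.id F4 :=
  frobenius_comp_frobenius_of_natCard_eq_sq 2 (GaloisField.card 2 2 two_ne_zero)

lemma monic_X_pow_sub_one {R : Type*} [Ring R] (n : ℕ) [NeZero n] : (X ^ n - 1 : R[X]).Monic := by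
  simpa only [C_1] using monic_X_pow_sub_C (1 : R) (NeZero.ne n)

lemma degree_X_pow_sub_one {R : Type*} [Ring R] [Nontrivial R] (n : ℕ) [NeZero n] :
    (X ^ n - 1 : R[X]).degree = n := by
  simpa only [C_1] using degree_X_pow_sub_C (NeZero.pos n) (1 : R)

lemma reverse_eq_sum_range {R : Type*} [Semiring R] (p : R[X]) :
    p.reverse = ∑ j ∈ Finset.range (p.natDegree + 1), C (p.coeff j) * X ^ (p.natDegree - j) := by
  rw [p.reverse.as_sum_range_C_mul_X_pow' (Nat.lt_add_one_of_le p.reverse_natDegree_le),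
    ← Finset.sum_range_reflect]
  refine Finset.sum_congr rfl fun j hj => ?_
  have hj' : j ≤ p.natDegree := Finset.mem_range_succ_iff.1 hj
  rw [Nat.add_sub_cancel, coeff_reverse, revAt_le (Nat.sub_le _ _), Nat.sub_sub_self hj']

lemma add_sub_one_mul_mod_eq_zero_iff (n : ℕ) [NeZero n] (i j : ℕ) :
    (i + (n - 1) * j) % n = 0 ↔ i % n = j % n := by
  rw [← Nat.dvd_iff_mod_eq_zero, ← ZMod.natCast_eq_zero_iff, ← ZMod.natCast_eq_natCast_iff']
  push_cast [Nat.cast_sub (NeZero.one_le : 1 ≤ n)]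
  rw [ZMod.natCast_self, zero_sub, neg_one_mul, ← sub_eq_add_neg, sub_eq_zero]

section QuotientRing

variable {n : ℕ}

lemma toRng_eq_zero_iff {p : F4[X]} : toRng n p = 0 ↔ X ^ n - 1 ∣ p :=
  Ideal.Quotient.eq_zero_iff_dvd _ _

lemma toRng_mod (p : F4[X]) : toRng n (p % (X ^ n - 1)) = toRng n p := by
  rw [← sub_eq_zero, ← map_sub, toRng_eq_zero_iff]
  exact ⟨-(p / (X ^ n - 1)), by linear_combination EuclideanDomain.mod_add_div p (X ^ n - 1)⟩

lemma toRng_X_pow_self : toRng n X ^ n = 1 := by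
  have h : toRng n (X ^ n - 1) = 0 := toRng_eq_zero_iff.2 dvd_rfl
  rwa [map_sub, map_pow, map_one, sub_eq_zero] at h

variable (n) [NeZero n]

/-- The class `x` of `X` as a unit of `F₄[X]/(Xⁿ - 1)`, so that the paper's `X^{n-i}` becomes the
inverse of `x ^ i`. -/
def rngX : (Rng n)ˣ :=
  Units.ofPowEqOne (toRng n X) n toRng_X_pow_self (NeZero.ne n)

lemma val_rngX : (rngX n : Rng n) = toRng n X := rfl

lemma rngX_pow_self : rngX n ^ n = 1 := Units.pow_ofPowEqOne _ _

lemma inv_rngX : (rngX n)⁻¹ = rngX n ^ (n - 1) :=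
  inv_eq_of_mul_eq_one_right <| by rw [mul_pow_sub_one (NeZero.ne n), rngX_pow_self]

/-- The conjugation `∑ aᵢ xⁱ ↦ ∑ aᵢ² x⁻ⁱ` of `F₄[X]/(Xⁿ - 1)`, which `conjT n` represents on
polynomials. -/
def rngConj : Rng n →+* Rng n :=
  Ideal.Quotient.lift _
    (eval₂RingHom ((toRng n).comp (C.comp (frobenius F4 2))) ((rngX n)⁻¹ : (Rng n)ˣ)) <| by
      intro p hp
      obtain ⟨q, rfl⟩ := Ideal.mem_span_singleton.1 hp
      have hx : (((rngX n)⁻¹ : (Rng n)ˣ) : Rng n) ^ n = 1 := by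
        rw [← Units.val_pow_eq_pow_val, inv_pow, rngX_pow_self, inv_one, Units.val_one]
      simp only [map_mul, map_sub, map_pow, map_one, coe_eval₂RingHom, eval₂_X, hx, sub_self,
        zero_mul]

variable {n}

lemma rngConj_toRng (p : F4[X]) :
    rngConj n (toRng n p) =
      p.eval₂ ((toRng n).comp (C.comp (frobenius F4 2))) ((rngX n)⁻¹ : (Rng n)ˣ) := rfl

lemma rngConj_toRng_C (a : F4) : rngConj n (toRng n (C a)) = toRng n (C (a ^ 2)) := by
  rw [rngConj_toRng, eval₂_C]
  rfl

lemma rngConj_rngX : rngConj n (rngX n) = ((rngX n)⁻¹ : (Rng n)ˣ) := by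
  rw [val_rngX, rngConj_toRng, eval₂_X]

lemma rngConj_rngX_pow (m : ℕ) :
    rngConj n (rngX n ^ m : (Rng n)ˣ) = ((rngX n)⁻¹ ^ m : (Rng n)ˣ) := by
  rw [Units.val_pow_eq_pow_val, map_pow, rngConj_rngX, Units.val_pow_eq_pow_val]

lemma rngConj_inv_rngX : rngConj n ((rngX n)⁻¹ : (Rng n)ˣ) = rngX n := by
  have h : Units.map (rngConj n : Rng n →* Rng n) (rngX n) = (rngX n)⁻¹ := Units.ext rngConj_rngX
  calc rngConj n ((rngX n)⁻¹ : (Rng n)ˣ)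
      = (Units.map (rngConj n : Rng n →* Rng n) (rngX n)⁻¹ : (Rng n)ˣ) := rfl
    _ = rngX n := by rw [map_inv, h, inv_inv]

lemma rngConj_rngConj (r : Rng n) : rngConj n (rngConj n r) = r := by
  suffices h : ((rngConj n).comp (rngConj n)).comp (toRng n) = toRng n by
    obtain ⟨p, rfl⟩ := Ideal.Quotient.mk_surjective r
    exact RingHom.congr_fun h p
  refine Polynomial.ringHom_ext (fun a => ?_) ?_
  · rw [RingHom.comp_apply, RingHom.comp_apply, rngConj_toRng_C, rngConj_toRng_C]
    exact congrArg (fun b => toRng n (C b)) (RingHom.congr_fun frobenius_comp_frobenius_F4 a)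
  · rw [RingHom.comp_apply, RingHom.comp_apply, ← val_rngX, rngConj_rngX, rngConj_inv_rngX]

lemma toRng_monomial (m : ℕ) (a : F4) :
    toRng n (monomial m a) = toRng n (C a) * (rngX n ^ m : (Rng n)ˣ) := by
  rw [← C_mul_X_pow_eq_monomial, map_mul, map_pow, Units.val_pow_eq_pow_val, val_rngX]

lemma rngConj_toRng_monomial (m : ℕ) (a : F4) :
    rngConj n (toRng n (monomial m a)) = toRng n (monomial ((n - 1) * m) (a ^ 2)) := by
  rw [toRng_monomial, toRng_monomial, map_mul, rngConj_toRng_C, rngConj_rngX_pow, inv_rngX,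
    ← pow_mul]

lemma toRng_eq_sum_range (p : F4[X]) :
    toRng n p =
      ∑ i ∈ Finset.range n,
        toRng n (C ((p % (X ^ n - 1)).coeff i)) * (rngX n ^ i : (Rng n)ˣ) := by
  have hdeg : (p % (X ^ n - 1)).degree < (n : WithBot ℕ) :=
    (EuclideanDomain.mod_lt p (monic_X_pow_sub_one n).ne_zero).trans_eq (degree_X_pow_sub_one n)
  have hnat : (p % (X ^ n - 1)).natDegree < n := by
    rcases eq_or_ne (p % (X ^ n - 1)) 0 with h0 | h0
    · rw [h0, natDegree_zero]
      exact NeZero.pos n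
    · exact (natDegree_lt_iff_degree_lt h0).2 hdeg
  conv_lhs => rw [← toRng_mod, as_sum_range' _ n hnat, map_sum]
  simp only [toRng_monomial]

lemma toRng_conjT (p : F4[X]) : toRng n (conjT n p) = rngConj n (toRng n p) := by
  have hterm : ∀ i ∈ Finset.range n,
      rngConj n (toRng n (C ((p % (X ^ n - 1)).coeff i)) * (rngX n ^ i : (Rng n)ˣ)) =
        toRng n (C ((p % (X ^ n - 1)).coeff i ^ 2) * X ^ (n - i)) := by
    intro i hi
    rw [map_mul, rngConj_toRng_C, rngConj_rngX_pow, C_mul_X_pow_eq_monomial, toRng_monomial,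
      pow_sub _ (Finset.mem_range.1 hi).le, rngX_pow_self, one_mul, inv_pow]
  rw [toRng_eq_sum_range p, map_sum, Finset.sum_congr rfl hterm, Finset.range_eq_Ico,
    Finset.sum_eq_sum_Ico_succ_bot (NeZero.pos n), conjT, map_add, map_sum, map_mul, map_pow _ X,
    Nat.sub_zero, toRng_X_pow_self, mul_one]

end QuotientRing

section HermitianForm

variable {m : ℕ}

lemma hermInner_eq_dotProduct (u v : Fin m → F4) : hermInner u v = u ⬝ᵥ fun i => v i ^ 2 := rfl

lemma hermInner_single_left (i : Fin m) (a : F4) (v : Fin m → F4) :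
    hermInner (Pi.single i a) v = a * v i ^ 2 := by
  rw [hermInner_eq_dotProduct, single_dotProduct]

lemma hermInner_add_left (u v w : Fin m → F4) :
    hermInner (u + v) w = hermInner u w + hermInner v w := by
  simp only [hermInner_eq_dotProduct, add_dotProduct]

lemma hermInner_smul_left (c : F4) (u v : Fin m → F4) :
    hermInner (c • u) v = c * hermInner u v := by
  simp only [hermInner_eq_dotProduct, smul_dotProduct, smul_eq_mul]

lemma hermInner2_add_left (u v w : (Fin m → F4) × (Fin m → F4)) :
    hermInner2 (u + v) w = hermInner2 u w + hermInner2 v w := by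
  simp only [hermInner2, Prod.fst_add, Prod.snd_add, hermInner_add_left, add_add_add_comm]

lemma hermInner2_smul_left (c : F4) (u v : (Fin m → F4) × (Fin m → F4)) :
    hermInner2 (c • u) v = c * hermInner2 u v := by
  simp only [hermInner2, Prod.smul_fst, Prod.smul_snd, hermInner_smul_left, mul_add]

lemma span_le_hermDualPair_span {S : Set ((Fin m → F4) × (Fin m → F4))}
    (hS : ∀ u ∈ S, ∀ v ∈ S, hermInner2 u v = 0) :
    Submodule.span F4 S ≤ hermDualPair (Submodule.span F4 S) := by
  refine Submodule.span_le.2 fun v hv u hu => ?_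
  induction hu using Submodule.span_induction with
  | mem u hu => exact hS u hu v hv
  | zero => simpa only [zero_smul, zero_mul] using hermInner2_smul_left 0 0 v
  | add u w _ _ hu hw => rw [hermInner2_add_left, hu, hw, add_zero]
  | smul c u _ hu => rw [hermInner2_smul_left, hu, mul_zero]

end HermitianForm

section CoefficientVectors

variable {n : ℕ}

lemma coeffVec_congr {p q : F4[X]} (h : toRng n p = toRng n q) : coeffVec n p = coeffVec n q := by
  rw [← sub_eq_zero, ← map_sub, toRng_eq_zero_iff] at h
  unfold coeffVec
  rw [mod_eq_of_dvd_sub h]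

lemma coeffVec_add (p q : F4[X]) : coeffVec n (p + q) = coeffVec n p + coeffVec n q := by
  ext i
  simp only [coeffVec, add_mod, coeff_add, Pi.add_apply]

variable [NeZero n]

lemma coeffVec_monomial (m : ℕ) (a : F4) :
    coeffVec n (monomial m a) = Pi.single (Fin.ofNat n m) a := by
  have hred : toRng n (monomial m a) = toRng n (monomial (m % n) a) := by
    rw [toRng_monomial, toRng_monomial, ← pow_eq_pow_mod m (rngX_pow_self n)]
  have hdeg : (monomial (m % n) a).degree < (X ^ n - 1 : F4[X]).degree := by
    rw [degree_X_pow_sub_one]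
    exact (degree_monomial_le _ a).trans_lt (by exact_mod_cast Nat.mod_lt m (NeZero.pos n))
  ext i
  rw [coeffVec_congr hred, coeffVec,
    (mod_eq_self_iff (monic_X_pow_sub_one n).ne_zero).2 hdeg, coeff_monomial, Pi.single_apply]
  simp only [Fin.ext_iff, Fin.val_ofNat, eq_comm]

lemma hermInner_coeffVec_monomial (i j : ℕ) (a b : F4) :
    hermInner (coeffVec n (monomial i a)) (coeffVec n (monomial j b)) =
      coeffVec n (monomial i a * conjT n (monomial j b)) 0 := by
  have hprod : toRng n (monomial i a * conjT n (monomial j b)) =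
      toRng n (monomial (i + (n - 1) * j) (a * b ^ 2)) := by
    rw [map_mul, toRng_conjT, rngConj_toRng_monomial, ← map_mul, monomial_mul_monomial]
  have hindex : 0 = Fin.ofNat n (i + (n - 1) * j) ↔ Fin.ofNat n i = Fin.ofNat n j := by
    simp only [Fin.ext_iff, Fin.val_ofNat, Fin.val_zero, eq_comm (a := 0),
      add_sub_one_mul_mod_eq_zero_iff]
  rw [coeffVec_congr hprod, coeffVec_monomial, coeffVec_monomial, coeffVec_monomial,
    hermInner_single_left, Pi.single_apply, Pi.single_apply, ite_pow, zero_pow two_ne_zero, mul_ite,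
    mul_zero]
  simp only [hindex]

lemma hermInner_coeffVec (p q : F4[X]) :
    hermInner (coeffVec n p) (coeffVec n q) = coeffVec n (p * conjT n q) 0 := by
  induction p using Polynomial.induction_on' with
  | add p p' hp hp' =>
    rw [coeffVec_add, hermInner_add_left, hp, hp', add_mul, coeffVec_add, Pi.add_apply]
  | monomial i a =>
    induction q using Polynomial.induction_on' with
    | add q q' hq hq' =>
      have hconj : toRng n (monomial i a * conjT n (q + q')) =
          toRng n (monomial i a * conjT n q + monomial i a * conjT n q') := by
        simp only [map_mul, map_add, toRng_conjT, mul_add]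
      rw [coeffVec_add, hermInner_add_right, hq, hq', coeffVec_congr hconj, coeffVec_add,
        Pi.add_apply]
    | monomial j b => exact hermInner_coeffVec_monomial i j a b

lemma hermInner2_coeffVec_eq_zero {p p' q q' : F4[X]}
    (h : toRng n p * rngConj n (toRng n q) + toRng n p' * rngConj n (toRng n q') = 0) :
    hermInner2 (coeffVec n p, coeffVec n p') (coeffVec n q, coeffVec n q') = 0 := by
  have hzero : toRng n (p * conjT n q + p' * conjT n q') = toRng n (monomial 0 0) := by
    rw [map_add, map_mul, map_mul, toRng_conjT, toRng_conjT, h, map_zero, map_zero]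
  rw [hermInner2, hermInner_coeffVec, hermInner_coeffVec, ← Pi.add_apply, ← coeffVec_add,
    coeffVec_congr hzero, coeffVec_monomial, Pi.single_zero, Pi.zero_apply]

end CoefficientVectors

section DualGenerator

variable {n : ℕ}

lemma dualGen_eq_reverse (g : F4[X]) :
    dualGen n g = (((X ^ n - 1) / g).map (frobenius F4 2)).reverse := by
  rw [reverse_eq_sum_range, natDegree_map]
  simp only [coeff_map, frobenius_def, dualGen]

variable [NeZero n]

lemma rngConj_toRng_reverse_map_frobenius (p : F4[X]) :
    rngConj n (toRng n (p.map (frobenius F4 2)).reverse) * (rngX n : Rng n) ^ p.natDegree =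
      toRng n p := by
  let _ : Invertible (rngX n : Rng n) := (rngX n).invertible
  have h := eval₂_reverse_mul_pow ((toRng n).comp (C.comp (frobenius F4 2))) (rngX n : Rng n)
    (p.map (frobenius F4 2))
  rw [invOf_units, natDegree_map, eval₂_map, RingHom.comp_assoc, RingHom.comp_assoc,
    frobenius_comp_frobenius_F4] at h
  rw [rngConj_toRng, h, RingHom.comp_id, val_rngX, ← hom_eval₂, eval₂_C_X]

lemma toRng_mul_rngConj_toRng_dualGen_eq_zero {g p : F4[X]} (hg : g ∣ X ^ n - 1)
    (hp : g ∣ p % (X ^ n - 1)) : toRng n p * rngConj n (toRng n (dualGen n g)) = 0 := by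
  obtain ⟨q, rfl⟩ := (EuclideanDomain.dvd_mod_iff hg).1 hp
  have hg0 : g ≠ 0 := ne_zero_of_dvd_ne_zero (monic_X_pow_sub_one n).ne_zero hg
  have hgh : toRng n g * toRng n ((X ^ n - 1) / g) = 0 := by
    rw [← map_mul, EuclideanDomain.mul_div_cancel' hg0 hg, toRng_eq_zero_iff]
  rw [dualGen_eq_reverse, ← ((rngX n).isUnit.pow _).mul_left_eq_zero, mul_assoc,
    rngConj_toRng_reverse_map_frobenius, map_mul, mul_right_comm, hgh, zero_mul]

end DualGenerator

theorem D_herm_self_orthogonal_general (n : ℕ) [NeZero n] (g₁ g₂ ν : F4[X])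
    (hg₁ : g₁ ∣ X ^ n - 1) (hg₂ : g₂ ∣ X ^ n - 1)
    (hcross : g₂ ∣ ((ν + conjT n ν) * dualGen n g₁) % (X ^ n - 1))
    (hnorm₁ : g₁ ∣ ((ν * conjT n ν + 1) * dualGen n g₁) % (X ^ n - 1))
    (hnorm₂ : g₂ ∣ ((ν * conjT n ν + 1) * dualGen n g₂) % (X ^ n - 1)) :
    Dqc n g₁ g₂ ν ≤ hermDualPair (Dqc n g₁ g₂ ν) := by
  have orth₁₂ := toRng_mul_rngConj_toRng_dualGen_eq_zero hg₂ hcross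
  have orth₁₁ := toRng_mul_rngConj_toRng_dualGen_eq_zero hg₁ hnorm₁
  have orth₂₂ := toRng_mul_rngConj_toRng_dualGen_eq_zero hg₂ hnorm₂
  have orth₂₁ := congrArg (rngConj n) orth₁₂
  simp only [map_mul, map_add, map_one, map_zero, toRng_conjT, rngConj_rngConj]
    at orth₁₁ orth₁₂ orth₂₁ orth₂₂
  apply span_le_hermDualPair_span
  rintro _ (⟨c, rfl⟩ | ⟨s, rfl⟩) _ (⟨c', rfl⟩ | ⟨s', rfl⟩) <;>
    apply hermInner2_coeffVec_eq_zero <;>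
    simp only [map_mul, map_neg, toRng_conjT, rngConj_rngConj]
  · linear_combination (toRng n c * rngConj n (toRng n c')) * orth₁₁
  · linear_combination (-toRng n c * rngConj n (toRng n s')) * orth₁₂
  · linear_combination (-toRng n s * rngConj n (toRng n c')) * orth₂₁
  · linear_combination (toRng n s * rngConj n (toRng n s')) * orth₂₂

/-- Theorem 2: under the stated divisibility conditions, the dual quasi-cyclic code `D`
is Hermitian self-orthogonal: `D ⊆ D^{⊥h}`. -/
theorem D_herm_self_orthogonal (n : ℕ) (hn : Odd n) (g₁ g₂ ν : Polynomial F4)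
    (hg₁m : g₁.Monic) (hg₁d : g₁ ∣ X ^ n - 1)
    (hg₂m : g₂.Monic) (hg₂d : g₂ ∣ X ^ n - 1)
    (h1 : g₁ ∣ dualGen n g₁)
    (h2 : g₂ ∣ dualGen n g₂)
    (h3 : g₂ ∣ ((ν + conjT n ν) * dualGen n g₁) % (X ^ n - 1))
    (h4 : g₁ ∣ ((ν * conjT n ν + 1) * dualGen n g₁) % (X ^ n - 1))
    (h5 : g₂ ∣ ((ν * conjT n ν + 1) * dualGen n g₂) % (X ^ n - 1)) :
    Dqc n g₁ g₂ ν ≤ hermDualPair (Dqc n g₁ g₂ ν) := by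
  have : NeZero n := ⟨hn.pos.ne'⟩
  exact D_herm_self_orthogonal_general n g₁ g₂ ν hg₁d hg₂d h3 h4 h5

end
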